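/- Let 𝒢 = (G_1, …, G_ℓ) be a connected temporal graph with orbit number r = |𝒢/Aut(𝒢)|. For every vertex u, every orbit S' of Aut(𝒢), and every time step t with t + r ≤ ℓ, there is a temporal walk starting at u at time step t and ending at a time step at most t + r that ends at a vertex of S'. -/

import Mathlib

/-!
Fix the start `u` at time `t` and let `R k` be the set of vertices reachable by a temporal walk
ending at time exactly `t + k`. Waiting gives `R k ⊆ R (k + 1)`. If `R k` misses some orbit, the
union of the orbits met by `R k` is a nonempty proper subset of `V`, so the connected snapshot
`G_{t+k}` has an edge `xy` leaving it. An automorphism moves `x` into `R k`, and it moves `y` to a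
neighbour lying in the same, so far unmet, orbit as `y`; hence `R (k + 1)` meets strictly more
orbits than `R k` (`exists_new_orbit`). If the orbit `S'` were missed at all times up to `t + r`,
then `R r` would meet at least `r + 1` orbits, although there are only `r`.
-/

open scoped BigOperators

/-- A temporal graph on a finite vertex set `V`: a lifetime `ℓ` together with a
snapshot graph `snap t` for every time step `t` (only `t ∈ [1, ℓ]` is relevant). -/
structure TemporalGraph (V : Type) [Fintype V] where
  lifetime : ℕ
  snap : ℕ → SimpleGraph V

namespace TemporalGraph

variable {V : Type} [Fintype V]

/-- A temporal graph is connected if every snapshot within its lifetime is connected. -/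
def IsConnectedTG (𝒢 : TemporalGraph V) : Prop :=
  ∀ t, 1 ≤ t → t ≤ 𝒢.lifetime → (𝒢.snap t).Connected

/-- `W` is a temporal walk starting at time step `t` and ending at time step `t'`:
at each time step `s` with `t ≤ s < t'` it either waits or traverses an edge of
the snapshot `G_s`. -/
def IsWalk (𝒢 : TemporalGraph V) (W : ℕ → V) (t t' : ℕ) : Prop :=
  1 ≤ t ∧ t ≤ t' ∧ t' ≤ 𝒢.lifetime ∧
    ∀ s, t ≤ s → s < t' → W (s + 1) = W s ∨ (𝒢.snap s).Adj (W s) (W (s + 1))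

/-- The set of vertices visited by `W` between time steps `t` and `t'`. -/
def visited (W : ℕ → V) (t t' : ℕ) : Set V := W '' Set.Icc t t'

/-- `σ` is an automorphism of the temporal graph `𝒢`, i.e. an automorphism of
every snapshot within the lifetime. -/
def IsAut (𝒢 : TemporalGraph V) (σ : Equiv.Perm V) : Prop :=
  ∀ t, 1 ≤ t → t ≤ 𝒢.lifetime →
    ∀ u v : V, (𝒢.snap t).Adj u v ↔ (𝒢.snap t).Adj (σ u) (σ v)

/-- The orbit of a vertex `u` under `Aut(𝒢)`. -/
def orbit (𝒢 : TemporalGraph V) (u : V) : Set V :=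
  {v | ∃ σ : Equiv.Perm V, 𝒢.IsAut σ ∧ σ u = v}

/-- `S` is an orbit of `Aut(𝒢)`. -/
def IsOrbit (𝒢 : TemporalGraph V) (S : Set V) : Prop :=
  ∃ u : V, S = 𝒢.orbit u

/-- The orbit number of `𝒢`: the number of orbits of `Aut(𝒢)` on `V`. -/
noncomputable def orbitNumber (𝒢 : TemporalGraph V) : ℕ :=
  (Set.range 𝒢.orbit).ncard

/-- Vertices reachable from `u` by a temporal walk starting at time step `t`
and ending at a time step at most `t'`. -/
def reachSet (𝒢 : TemporalGraph V) (u : V) (t t' : ℕ) : Set V :=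
  {v | ∃ t'' ≤ t', ∃ W : ℕ → V, 𝒢.IsWalk W t t'' ∧ W t = u ∧ W t'' = v}

/-- `W` is a temporal walk that only traverses orbit boundary edges
(edges between two different orbits); waiting is allowed. -/
def IsBoundaryWalk (𝒢 : TemporalGraph V) (W : ℕ → V) (t t' : ℕ) : Prop :=
  1 ≤ t ∧ t ≤ t' ∧ t' ≤ 𝒢.lifetime ∧
    ∀ s, t ≤ s → s < t' → W (s + 1) = W s ∨
      ((𝒢.snap s).Adj (W s) (W (s + 1)) ∧ 𝒢.orbit (W s) ≠ 𝒢.orbit (W (s + 1)))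

/-- The lane `L_{t,t'}(X)`: all vertices reachable from some vertex of `X` by a
temporal walk starting at time step `t`, ending at a time step at most `t'`,
that only uses orbit boundary edges. -/
def lane (𝒢 : TemporalGraph V) (X : Set V) (t t' : ℕ) : Set V :=
  {v | ∃ u ∈ X, ∃ t'' ≤ t', ∃ W : ℕ → V, 𝒢.IsBoundaryWalk W t t'' ∧ W t = u ∧ W t'' = v}

end TemporalGraph

namespace TemporalGraph

variable {V : Type} [Fintype V]

lemma IsAut.mul {𝒢 : TemporalGraph V} {σ τ : Equiv.Perm V} (hσ : 𝒢.IsAut σ) (hτ : 𝒢.IsAut τ) :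
    𝒢.IsAut (σ * τ) := fun s h1 h2 a b =>
  (hτ s h1 h2 a b).trans (hσ s h1 h2 (τ a) (τ b))

lemma IsAut.inv {𝒢 : TemporalGraph V} {σ : Equiv.Perm V} (hσ : 𝒢.IsAut σ) :
    𝒢.IsAut σ⁻¹ := fun s h1 h2 a b => by
  simpa using (hσ s h1 h2 (σ⁻¹ a) (σ⁻¹ b)).symm

lemma mem_orbit_self (𝒢 : TemporalGraph V) (x : V) : x ∈ 𝒢.orbit x :=
  ⟨1, fun _ _ _ _ _ => Iff.rfl, rfl⟩

lemma orbit_apply {𝒢 : TemporalGraph V} {σ : Equiv.Perm V} (hσ : 𝒢.IsAut σ) (x : V) :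
    𝒢.orbit (σ x) = 𝒢.orbit x := by
  ext v
  constructor
  · rintro ⟨τ, hτ, rfl⟩
    exact ⟨τ * σ, hτ.mul hσ, rfl⟩
  · rintro ⟨τ, hτ, rfl⟩
    exact ⟨τ * σ⁻¹, hτ.mul hσ.inv, by simp⟩

/-- The vertices reachable from `u` by a temporal walk starting at time step `t` and ending at
time step exactly `t + k`. -/
def reachAt (𝒢 : TemporalGraph V) (u : V) (t k : ℕ) : Set V :=
  {v | ∃ W : ℕ → V, 𝒢.IsWalk W t (t + k) ∧ W t = u ∧ W (t + k) = v}

lemma reachAt_succ {𝒢 : TemporalGraph V} {u : V} {t k : ℕ} (hk : t + (k + 1) ≤ 𝒢.lifetime)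
    {w v : V} (hw : w ∈ 𝒢.reachAt u t k) (hv : v = w ∨ (𝒢.snap (t + k)).Adj w v) :
    v ∈ 𝒢.reachAt u t (k + 1) := by
  obtain ⟨W, ⟨h1, -, -, hW⟩, hu, rfl⟩ := hw
  refine ⟨fun s => if s ≤ t + k then W s else v, ⟨h1, by omega, hk, fun s hs hs' => ?_⟩,
    by simpa using hu, by simp⟩
  rcases Nat.lt_or_ge s (t + k) with h | h
  · simpa [h.le, Nat.succ_le_of_lt h] using hW s hs h
  · obtain rfl : s = t + k := by omega
    simpa using hv

/-- Some vertex reachable one step later lies in an orbit not met so far, as long as the orbit of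
`z` is not met. -/
lemma exists_new_orbit {𝒢 : TemporalGraph V} (hconn : 𝒢.IsConnectedTG) {u z : V} {t k : ℕ}
    (ht : 1 ≤ t) (hk : t + (k + 1) ≤ 𝒢.lifetime) (hne : (𝒢.reachAt u t k).Nonempty)
    (hz : 𝒢.orbit z ∉ 𝒢.orbit '' 𝒢.reachAt u t k) :
    ∃ v ∈ 𝒢.reachAt u t (k + 1), 𝒢.orbit v ∉ 𝒢.orbit '' 𝒢.reachAt u t k := by
  obtain ⟨w₀, hw₀⟩ := hne
  obtain ⟨p⟩ := (hconn (t + k) (by omega) (by omega)).preconnected w₀ z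
  obtain ⟨d, -, ⟨w, hw, hwd⟩, hd⟩ := p.exists_boundary_dart
    {x | 𝒢.orbit x ∈ 𝒢.orbit '' 𝒢.reachAt u t k} ⟨w₀, hw₀, rfl⟩ hz
  obtain ⟨σ, hσ, hσw⟩ : w ∈ 𝒢.orbit d.fst := hwd ▸ 𝒢.mem_orbit_self w
  refine ⟨σ d.snd, reachAt_succ hk hw (Or.inr ?_), ?_⟩
  · rw [← hσw]
    exact (hσ (t + k) (by omega) (by omega) _ _).1 d.adj
  · rw [orbit_apply hσ]
    exact hd

/-- Each time step before the orbit of `z` is met adds at least one orbit. -/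
lemma succ_le_ncard_orbits {𝒢 : TemporalGraph V} (hconn : 𝒢.IsConnectedTG) {u z : V} {t : ℕ}
    (ht : 1 ≤ t) (k : ℕ) (hk : t + k ≤ 𝒢.lifetime)
    (hz : ∀ j < k, 𝒢.orbit z ∉ 𝒢.orbit '' 𝒢.reachAt u t j) :
    k + 1 ≤ (𝒢.orbit '' 𝒢.reachAt u t k).ncard := by
  induction k with
  | zero =>
    refine (Set.ncard_pos (Set.toFinite _)).2 ⟨_, u, ⟨fun _ => u, ?_, rfl, rfl⟩, rfl⟩
    exact ⟨ht, by omega, hk, fun _ _ _ => Or.inl rfl⟩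
  | succ k ih =>
    have ih' := ih (by omega) fun j hj => hz j (by omega)
    have hne : (𝒢.reachAt u t k).Nonempty :=
      Set.image_nonempty.1 (Set.nonempty_of_ncard_ne_zero (Nat.ne_zero_of_lt ih'))
    obtain ⟨v, hv, hv'⟩ := exists_new_orbit hconn ht hk hne (hz k (by omega))
    have hlt : (𝒢.orbit '' 𝒢.reachAt u t k).ncard < (𝒢.orbit '' 𝒢.reachAt u t (k + 1)).ncard :=
      Set.ncard_lt_ncard ⟨Set.image_mono fun w hw => reachAt_succ hk hw (Or.inl rfl),
        fun h => hv' (h ⟨v, hv, rfl⟩)⟩ (Set.toFinite _)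
    omega

end TemporalGraph

/-- in a connected temporal graph with orbit number `r`, from any vertex
`u` and any time step `t` with `t + r ≤ ℓ`, some vertex of any given orbit `S'` is
reachable by a temporal walk ending at a time step at most `t + r`. -/
theorem reach_orbit_within_r {V : Type} [Fintype V] (𝒢 : TemporalGraph V)
    (hconn : 𝒢.IsConnectedTG) (r : ℕ) (hr : r = 𝒢.orbitNumber)
    (u : V) (S' : Set V) (hS' : 𝒢.IsOrbit S')
    (t : ℕ) (ht : 1 ≤ t) (htr : t + r ≤ 𝒢.lifetime) :
    ∃ t' ≤ t + r, ∃ W : ℕ → V, 𝒢.IsWalk W t t' ∧ W t = u ∧ W t' ∈ S' := by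
  obtain ⟨z, rfl⟩ := hS'
  by_contra hcon
  have hz : ∀ j < r, 𝒢.orbit z ∉ 𝒢.orbit '' 𝒢.reachAt u t j := by
    rintro j hj ⟨v, ⟨W, hW, hu, hv⟩, hvz⟩
    exact hcon ⟨t + j, by omega, W, hW, hu, by rw [hv, ← hvz]; exact 𝒢.mem_orbit_self v⟩
  have h1 := TemporalGraph.succ_le_ncard_orbits hconn ht r htr hz
  have h2 : (𝒢.orbit '' 𝒢.reachAt u t r).ncard ≤ 𝒢.orbitNumber :=
    Set.ncard_le_ncard (Set.image_subset_range _ _) (Set.toFinite _)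
  omega
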